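/- arXiv:1712.00848 — 4 statements merged into one kernel-verified Lean document; each statement's English description precedes it below -/
import Mathlib

section
/- (Relinearization correctness) Let R be a commutative ring, T ≥ 2 an integer, L ≥ 1, and s, s' elements of R. For 0 ≤ i < L let a_i, e_i ∈ R and set b_i = −(s'·a_i + T·e_i) + T^i·s (the key homomorphisms pseudo-encrypting s under s'). Let c_0, c_1 ∈ R and let c_{1,0}, ..., c_{1,L−1} ∈ R satisfy c_1 = Σ_{i<L} T^i·c_{1,i} (a base-T decomposition of c_1). Define c_0^{relin} = c_0 + Σ_{i<L} c_{1,i}·b_i and c_1^{relin} = Σ_{i<L} c_{1,i}·a_i. Then c_0^{relin} + c_1^{relin}·s' = (c_0 + c_1·s) − T·Σ_{i<L} c_{1,i}·e_i. In particular, when T = t, relinearization preserves the decrypted message modulo t while switching the key from s to s'. -/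
/-- Relinearization correctness: with key homomorphisms
`b i = -(s'·aᵢ + T·eᵢ) + Tⁱ·s` pseudo-encrypting `s` under `s'`, and a base-`T`
decomposition `c₁ = Σᵢ Tⁱ·c_{1,i}`, the relinearized ciphertext
`(c₀ + Σ c_{1,i}·bᵢ, Σ c_{1,i}·aᵢ)` satisfies
`c₀ᵣ + c₁ᵣ·s' = (c₀ + c₁·s) - T·Σ c_{1,i}·eᵢ`. -/
theorem relinearization_correct {R : Type*} [CommRing R] (T : ℤ) (hT : 2 ≤ T)
    (L : ℕ) (hL : 1 ≤ L) (s s' : R) (a e b : Fin L → R)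
    (hb : ∀ i : Fin L, b i = -(s' * a i + T • e i) + (T ^ (i : ℕ)) • s)
    (c0 c1 : R) (c1d : Fin L → R)
    (hc1 : c1 = ∑ i : Fin L, (T ^ (i : ℕ)) • c1d i) :
    (c0 + ∑ i : Fin L, c1d i * b i) + (∑ i : Fin L, c1d i * a i) * s'
      = (c0 + c1 * s) - T • ∑ i : Fin L, c1d i * e i := by
  have key : ∑ i : Fin L, c1d i * b i + (∑ i : Fin L, c1d i * a i) * s'
      = c1 * s - T • ∑ i : Fin L, c1d i * e i := by
    rw [hc1, Finset.sum_mul, Finset.sum_mul, Finset.smul_sum, ← Finset.sum_add_distrib,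
      ← Finset.sum_sub_distrib]
    refine Finset.sum_congr rfl fun i _ => ?_
    rw [hb i]
    simp only [zsmul_eq_mul]
    ring
  rw [add_assoc, key, add_sub_assoc]
end

section
/- (Correctness of the unattended ciphertext-structure change) Let q be a prime, A = (ZMod q)[z]/(z^n + 1), and let B be a commutative (ZMod q)-algebra. Let φ : A → B be a (ZMod q)-linear map, let T ≥ 2 and L ≥ 1 be integers, and let s' ∈ B. Let s ∈ A have coefficient vector (s_0, ..., s_{n−1}) with s_j ∈ ZMod q, so s = Σ_{j<n} s_j·z^j. For 0 ≤ j < n and 0 ≤ i < L, let a_i^{(j)}, e_i^{(j)} ∈ B and set b_i^{(j)} = −(s'·a_i^{(j)} + T·e_i^{(j)}) + T^i·s_j·1_B (pseudo-encryptions of the key coefficients s_j under s'). Let c_0, c_1 ∈ A, and for each j let d_i^{(j)} ∈ B satisfy φ(z^j·c_1) = Σ_{i<L} T^i·d_i^{(j)}. Define C_0 = φ(c_0) + Σ_{j<n} Σ_{i<L} d_i^{(j)}·b_i^{(j)} and C_1 = Σ_{j<n} Σ_{i<L} d_i^{(j)}·a_i^{(j)}. Then C_0 + C_1·s' = φ(c_0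 + c_1·s) − T·Σ_{j<n} Σ_{i<L} d_i^{(j)}·e_i^{(j)}. -/
open Polynomial

/-- Correctness of the unattended ciphertext-structure change: with
pseudo-encryptions `b_i^{(j)} = -(s'·a_i^{(j)} + T·e_i^{(j)}) + Tⁱ·s_j·1_B` of
the key coefficients `s_j` under `s'`, and base-`T` decompositions
`φ(zʲ·c₁) = Σ_i Tⁱ·d_i^{(j)}`, the restructured ciphertext
`(C₀, C₁) = (φ(c₀) + ΣΣ d·b, ΣΣ d·a)` satisfies
`C₀ + C₁·s' = φ(c₀ + c₁·s) − T·ΣΣ d·e`. -/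
theorem structure_change_correct (q n : ℕ) [Fact q.Prime] (hn : 0 < n)
    {B : Type*} [CommRing B] [Algebra (ZMod q) B]
    (φ : AdjoinRoot (X ^ n + 1 : (ZMod q)[X]) →ₗ[ZMod q] B)
    (T : ℤ) (hT : 2 ≤ T) (L : ℕ) (hL : 1 ≤ L) (s' : B)
    (sv : Fin n → ZMod q) (s : AdjoinRoot (X ^ n + 1 : (ZMod q)[X]))
    (hs : s = (AdjoinRoot.mk (X ^ n + 1 : (ZMod q)[X]))
      (∑ j : Fin n, C (sv j) * X ^ (j : ℕ)))
    (a e b : Fin L → Fin n → B)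
    (hb : ∀ (i : Fin L) (j : Fin n),
      b i j = -(s' * a i j + T • e i j) +
        (T ^ (i : ℕ)) • algebraMap (ZMod q) B (sv j))
    (c0 c1 : AdjoinRoot (X ^ n + 1 : (ZMod q)[X]))
    (d : Fin L → Fin n → B)
    (hd : ∀ j : Fin n,
      φ ((AdjoinRoot.root (X ^ n + 1 : (ZMod q)[X])) ^ (j : ℕ) * c1) =
        ∑ i : Fin L, (T ^ (i : ℕ)) • d i j) :
    (φ c0 + ∑ j : Fin n, ∑ i : Fin L, d i j * b i j) +
      (∑ j : Fin n, ∑ i : Fin L, d i j * a i j) * s'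
      = φ (c0 + c1 * s) - T • ∑ j : Fin n, ∑ i : Fin L, d i j * e i j := by
  have h1 : c1 * s = ∑ j : Fin n, sv j •
      ((AdjoinRoot.root (X ^ n + 1 : (ZMod q)[X])) ^ (j : ℕ) * c1) := by
    rw [hs, map_sum, Finset.mul_sum]
    refine Finset.sum_congr rfl fun j _ => ?_
    rw [map_mul, map_pow, AdjoinRoot.mk_X, AdjoinRoot.mk_C, Algebra.smul_def,
      AdjoinRoot.algebraMap_eq]
    ring
  have h2 : φ (c1 * s) = ∑ j : Fin n, ∑ i : Fin L,
      algebraMap (ZMod q) B (sv j) * ((T : B) ^ (i : ℕ) * d i j) := by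
    rw [h1, map_sum]
    refine Finset.sum_congr rfl fun j _ => ?_
    rw [map_smul, hd, Algebra.smul_def, Finset.mul_sum]
    refine Finset.sum_congr rfl fun i _ => ?_
    rw [zsmul_eq_mul, Int.cast_pow]
  rw [map_add, h2, add_assoc, add_sub_assoc]
  congr 1
  rw [zsmul_eq_mul]
  simp only [Finset.sum_mul, Finset.mul_sum, ← Finset.sum_add_distrib, ← Finset.sum_sub_distrib]
  refine Finset.sum_congr rfl fun j _ => Finset.sum_congr rfl fun i _ => ?_
  rw [hb, zsmul_eq_mul, zsmul_eq_mul, Int.cast_pow]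
  ring
end

section
/- (Cyclic convolution from negacyclic convolution via pre- and post-processing) Let R be a commutative ring, N a positive integer, and ω an invertible element of R with ω^N = −1. Given x, h : Fin N → R, define the pre-processed sequences x'_i = ω^i·x_i and h'_j = ω^j·h_j, and let y'_k = Σ_{i+j=k} x'_i·h'_j − Σ_{i+j=N+k} x'_i·h'_j be their negacyclic convolution (sums over 0 ≤ i, j < N). Then for every 0 ≤ k < N, the post-processed value ω^{−k}·y'_k equals the cyclic convolution Σ_{(i,j): i+j ≡ k (mod N)} x_i·h_j. -/
/-- Cyclic convolution from negacyclic convolution via pre- and post-processing: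
if `ω` is an invertible element with `ω^N = -1`, pre-processing `x'ᵢ = ωⁱxᵢ`,
`h'ⱼ = ωʲhⱼ`, taking the negacyclic convolution `y'`, and post-processing by
`ω^{-k}` yields the cyclic convolution of `x` and `h`. -/
theorem cyclic_from_negacyclic {R : Type*} [CommRing R] (N : ℕ) (hN : 0 < N)
    (ω : Rˣ) (hω : (ω : R) ^ N = -1) (x h : Fin N → R) :
    ∀ k : Fin N,
      ((ω⁻¹ : Rˣ) : R) ^ (k : ℕ) *
        ((∑ ij ∈ Finset.univ.filter
            (fun ij : Fin N × Fin N => (ij.1 : ℕ) + (ij.2 : ℕ) = (k : ℕ)),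
            ((ω : R) ^ (ij.1 : ℕ) * x ij.1) * ((ω : R) ^ (ij.2 : ℕ) * h ij.2))
         - ∑ ij ∈ Finset.univ.filter
            (fun ij : Fin N × Fin N => (ij.1 : ℕ) + (ij.2 : ℕ) = N + (k : ℕ)),
            ((ω : R) ^ (ij.1 : ℕ) * x ij.1) * ((ω : R) ^ (ij.2 : ℕ) * h ij.2))
      = ∑ ij ∈ Finset.univ.filter
          (fun ij : Fin N × Fin N => ((ij.1 : ℕ) + (ij.2 : ℕ)) % N = (k : ℕ)),
          x ij.1 * h ij.2 := by
  intro k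
  have hk := k.isLt
  have hinv : ((ω⁻¹ : Rˣ) : R) ^ (k : ℕ) * (ω : R) ^ (k : ℕ) = 1 := by
    rw [← mul_pow, Units.inv_mul, one_pow]
  rw [Finset.sum_filter, Finset.sum_filter, Finset.sum_filter, ← Finset.sum_sub_distrib,
    Finset.mul_sum]
  refine Finset.sum_congr rfl ?_
  rintro ⟨i, j⟩ -
  have hi := i.isLt
  have hj := j.isLt
  have key : ((ω : R) ^ (i : ℕ) * x i) * ((ω : R) ^ (j : ℕ) * h j)
      = (ω : R) ^ ((i : ℕ) + (j : ℕ)) * (x i * h j) := by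
    rw [pow_add]; ring
  simp only [key]
  by_cases h1 : (i : ℕ) + (j : ℕ) = (k : ℕ)
  · have h2 : ¬ ((i : ℕ) + (j : ℕ) = N + (k : ℕ)) := by omega
    have h3 : ((i : ℕ) + (j : ℕ)) % N = (k : ℕ) := by rw [h1, Nat.mod_eq_of_lt hk]
    rw [if_pos h1, if_neg h2, if_pos h3, h1, sub_zero, ← mul_assoc, hinv, one_mul]
  · by_cases h2 : (i : ℕ) + (j : ℕ) = N + (k : ℕ)
    · have h3 : ((i : ℕ) + (j : ℕ)) % N = (k : ℕ) := by
        rw [h2, Nat.add_mod_left, Nat.mod_eq_of_lt hk]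
      rw [if_neg h1, if_pos h2, if_pos h3, h2, pow_add, hω]
      linear_combination (x i * h j) * hinv
    · have h3 : ¬ (((i : ℕ) + (j : ℕ)) % N = (k : ℕ)) := by
        intro h3
        rcases Nat.lt_or_ge ((i : ℕ) + (j : ℕ)) N with hl | hl
        · rw [Nat.mod_eq_of_lt hl] at h3
          exact h1 h3
        · rw [Nat.mod_eq_sub_mod hl, Nat.mod_eq_of_lt (by omega)] at h3
          omega
      rw [if_neg h1, if_neg h2, if_neg h3, sub_zero, mul_zero]
end

section
/- (NTT inversion formula) Let R be a commutative ring, N a positive integer, and α ∈ R with α^N = 1 such that N·1 is invertible in R and α^i − 1 is invertible in R for every 1 ≤ i ≤ N − 1. Define the NTT of x : Fin N → R by X_k = Σ_{l<N} x_l·α^{lk} and the INTT of X by (N·1)^{−1}·Σ_{k<N} X_k·α^{−lk}. Then for every x : Fin N → R and every 0 ≤ l' < N, (N·1)^{−1}·Σ_{k<N} (Σ_{l<N} x_l·α^{lk})·α^{−l'k} = x_{l'}; i.e., the INTT inverts the NTT. -/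
/-- NTT inversion formula: if `α^N = 1`, `N·1` is invertible and `αⁱ - 1` is
invertible for `1 ≤ i ≤ N - 1`, then the INTT inverts the NTT:
`(N·1)⁻¹ · Σ_k (Σ_l x_l·α^{lk}) · α^{-l'k} = x_{l'}`. -/
theorem ntt_inversion {R : Type*} [CommRing R] (N : ℕ) (hN : 0 < N) (α : R)
    (hα : α ^ N = 1) (hNunit : IsUnit (N : R))
    (hprim : ∀ i : ℕ, 1 ≤ i → i ≤ N - 1 → IsUnit (α ^ i - 1))
    (x : Fin N → R) (l' : Fin N) :
    Ring.inverse (N : R) *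
      ∑ k : Fin N, (∑ l : Fin N, x l * α ^ ((l : ℕ) * (k : ℕ))) *
        (Ring.inverse α) ^ ((l' : ℕ) * (k : ℕ))
      = x l' := by
  have hu : IsUnit α := IsUnit.of_pow_eq_one hα hN.ne'
  have hab : α * Ring.inverse α = 1 := Ring.mul_inverse_cancel α hu
  generalize Ring.inverse α = β at hab ⊢
  have hβ : β ^ N = 1 := by
    have h := congrArg (fun y => y ^ N) hab
    simpa [mul_pow, hα] using h
  have hβu : IsUnit β := IsUnit.of_pow_eq_one hβ hN.ne'
  have hpow : ∀ d : ℕ, α ^ d * β ^ d = 1 := fun d => by rw [← mul_pow, hab, one_pow]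
  have key : ∀ l : Fin N, ∑ k : Fin N, (α ^ (l : ℕ) * β ^ (l' : ℕ)) ^ (k : ℕ)
      = if l = l' then (N : R) else 0 := by
    intro l
    split_ifs with h
    · subst h
      simp [hpow]
    · have hne : (l : ℕ) ≠ (l' : ℕ) := fun h' => h (Fin.ext h')
      have hr : (α ^ (l : ℕ) * β ^ (l' : ℕ)) ^ N = 1 := by
        rw [mul_pow, pow_right_comm, hα, pow_right_comm β, hβ, one_pow, one_pow, one_mul]
      have hunit : IsUnit (α ^ (l : ℕ) * β ^ (l' : ℕ) - 1) := by
        have hl := l.isLt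
        have hl' := l'.isLt
        rcases lt_or_gt_of_ne hne with hlt | hlt
        · obtain ⟨d, hd⟩ := Nat.exists_eq_add_of_lt hlt
          have h1 := hprim (d + 1) (by omega) (by omega)
          have h2 : α ^ (l : ℕ) * β ^ (l' : ℕ) - 1 = -(β ^ (d + 1) * (α ^ (d + 1) - 1)) := by
            have e : (l' : ℕ) = l + (d + 1) := by omega
            rw [e, pow_add β]
            linear_combination β ^ (d + 1) * hpow l + hpow (d + 1)
          rw [h2]
          exact ((hβu.pow _).mul h1).neg
        · obtain ⟨d, hd⟩ := Nat.exists_eq_add_of_lt hlt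
          have h1 := hprim (d + 1) (by omega) (by omega)
          have h2 : α ^ (l : ℕ) * β ^ (l' : ℕ) - 1 = α ^ (d + 1) - 1 := by
            have e : (l : ℕ) = l' + (d + 1) := by omega
            rw [e, pow_add α]
            linear_combination α ^ (d + 1) * hpow l'
          rw [h2]
          exact h1
      rw [Fin.sum_univ_eq_sum_range (fun k => (α ^ (l : ℕ) * β ^ (l' : ℕ)) ^ k) N]
      apply hunit.mul_left_cancel
      rw [mul_geom_sum, hr, sub_self, mul_zero]
  have hsum : ∑ k : Fin N, (∑ l : Fin N, x l * α ^ ((l : ℕ) * (k : ℕ))) *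
        β ^ ((l' : ℕ) * (k : ℕ)) = (N : R) * x l' := by
    calc _ = ∑ l : Fin N, x l * ∑ k : Fin N, (α ^ (l : ℕ) * β ^ (l' : ℕ)) ^ (k : ℕ) := by
          simp_rw [Finset.sum_mul, Finset.mul_sum]
          rw [Finset.sum_comm]
          refine Finset.sum_congr rfl fun l _ => Finset.sum_congr rfl fun k _ => ?_
          rw [mul_pow, ← pow_mul, ← pow_mul, mul_assoc]
      _ = _ := by
          simp [key, mul_comm]
  rw [hsum, ← mul_assoc, Ring.inverse_mul_cancel _ hNunit, one_mul]
end
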